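/- arXiv:0709.2722 — 3 statements merged into one kernel-verified Lean document; each statement's English description precedes it below -/
import Mathlib

section
/- Let δ > 0 and ε > 0 be real numbers, let X be a geodesic metric space with δ-slim triangles, and let h be an isometry of X. Suppose A : ℝ → X is an isometric embedding (a geodesic line) which is translated by h, i.e. there is a real number ℓ ≥ ε with h(A(t)) = A(t + ℓ) for all t ∈ ℝ. Set m = ⌈2δ/ε⌉. Then for every point x ∈ X, writing L = dist(x, A(ℝ)) for the distance from x to the image of A, if L ≥ 3δ then d(x, h^m·x) ≥ 2L − 6δ. -/
/-!
Write `g = h^m`, `D = mℓ ≥ 2δ`, and let `p = A t₀` be a point of the line nearest to `x`, so that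
`d(x, p) = L`. Suppose `d(x, g x) < 2L - 6δ`. Every point of a geodesic `[x, g x]`, and of
`[g x, g² x]`, then has distance more than `3δ` from the line, so by slimness every point of
`[x, g² x]` has distance more than `2δ` from it.

The triangle `x, A (t₀ - 4D), A (t₀ + 4D)` shows that `p` is `δ`-close to one of the two sides at
`x`. By symmetry (`not_close_of_translate` treats both directions), say it is `δ`-close to a point
`v` of `[x, A (t₀ + 4D)]`. In the triangle with vertices `x, A (t₀ + 4D), g² x`, the point `v` is
too near the line to be `δ`-close to `[x, g² x]`, so it is `δ`-close to `[g² x, A (t₀ + 4D)]`. This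
makes that side long (`dist_ge_of_close`): its length is at least `L + 4D - 4δ ≥ L + 2D`, while it
is at most `L + 2D` by passing through the projection `g² p = A (t₀ + 2D)`. Equality would force
`[x, p] ∪ [p, A (t₀ + 2D)]` to be a geodesic, and the same estimate, applied with `v = p` on this
geodesic, gives a contradiction with room to spare.
-/

open Metric Filter

/-- `f` parametrizes a geodesic segment from `x` to `y` by arc length on `[0, dist x y]`. -/
def IsGeodesicSegment {X : Type*} [MetricSpace X] (f : ℝ → X) (x y : X) : Prop :=
  f 0 = x ∧ f (dist x y) = y ∧
    ∀ s ∈ Set.Icc (0 : ℝ) (dist x y), ∀ t ∈ Set.Icc (0 : ℝ) (dist x y),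
      dist (f s) (f t) = |s - t|

/-- `σ` is (the image of) a geodesic segment joining `x` to `y`. -/
def IsGeodesic {X : Type*} [MetricSpace X] (σ : Set X) (x y : X) : Prop :=
  ∃ f : ℝ → X, IsGeodesicSegment f x y ∧ σ = f '' Set.Icc 0 (dist x y)

/-- `X` is a geodesic metric space: any two points are joined by a geodesic segment. -/
def GeodesicSpace (X : Type*) [MetricSpace X] : Prop :=
  ∀ x y : X, ∃ σ : Set X, IsGeodesic σ x y

/-- Triangles in `X` are δ-slim: each side lies in the closed δ-neighborhood of the
union of the other two sides. -/
def SlimTriangles (X : Type*) [MetricSpace X] (δ : ℝ) : Prop :=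
  ∀ x y z : X, ∀ s₁ s₂ s₃ : Set X,
    IsGeodesic s₁ x y → IsGeodesic s₂ y z → IsGeodesic s₃ z x →
    ∀ p ∈ s₁, ∃ q ∈ s₂ ∪ s₃, dist p q ≤ δ

theorem IsGeodesic.symm {X : Type*} [MetricSpace X] {σ : Set X} {x y : X}
    (hσ : IsGeodesic σ x y) : IsGeodesic σ y x := by
  obtain ⟨f, ⟨h0, h1, hd⟩, rfl⟩ := hσ
  refine ⟨fun s => f (dist x y - s), ⟨by simpa using h1, ?_, ?_⟩, ?_⟩
  · simp [dist_comm y x, h0]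
  · intro s hs t ht
    rw [dist_comm y x] at hs ht
    rw [hd _ ⟨by linarith [hs.2], by linarith [hs.1]⟩ _ ⟨by linarith [ht.2], by linarith [ht.1]⟩,
      abs_sub_comm]
    congr 1
    ring
  · rw [dist_comm y x]
    ext q
    constructor
    · rintro ⟨s, hs, rfl⟩
      exact ⟨dist x y - s, ⟨by linarith [hs.2], by linarith [hs.1]⟩, by simp⟩
    · rintro ⟨s, hs, rfl⟩
      exact ⟨dist x y - s, ⟨by linarith [hs.2], by linarith [hs.1]⟩, rfl⟩

theorem IsGeodesic.image {X : Type*} [MetricSpace X] {σ : Set X} {x y : X}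
    (hσ : IsGeodesic σ x y) {g : X → X} (hg : Isometry g) :
    IsGeodesic (g '' σ) (g x) (g y) := by
  obtain ⟨f, ⟨h0, h1, hd⟩, rfl⟩ := hσ
  refine ⟨g ∘ f, ⟨by simp [h0], by simp [hg.dist_eq, h1], ?_⟩, ?_⟩
  · intro s hs t ht
    rw [hg.dist_eq] at hs ht
    simpa [hg.dist_eq] using hd s hs t ht
  · rw [hg.dist_eq, Set.image_comp]

theorem IsGeodesic.dist_add_dist {X : Type*} [MetricSpace X] {σ : Set X} {x y q : X}
    (hσ : IsGeodesic σ x y) (hq : q ∈ σ) : dist x q + dist q y = dist x y := by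
  obtain ⟨f, ⟨h0, h1, hd⟩, rfl⟩ := hσ
  obtain ⟨s, hs, rfl⟩ := hq
  have e1 := hd 0 ⟨le_rfl, dist_nonneg⟩ s hs
  have e2 := hd s hs (dist x y) ⟨dist_nonneg, le_rfl⟩
  rw [h0, abs_of_nonpos (by linarith [hs.1])] at e1
  rw [h1, abs_of_nonpos (by linarith [hs.2])] at e2
  linarith

/-- A point realizing equality in the triangle inequality lies on some geodesic, obtained by
concatenation. -/
theorem exists_isGeodesic_mem {X : Type*} [MetricSpace X] (hgeo : GeodesicSpace X) {x y q : X}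
    (hq : dist x q + dist q y = dist x y) : ∃ σ, IsGeodesic σ x y ∧ q ∈ σ := by
  obtain ⟨_, f, ⟨f0, f1, fd⟩, -⟩ := hgeo x q
  obtain ⟨_, k, ⟨k0, k1, kd⟩, -⟩ := hgeo q y
  have n1 : 0 ≤ dist x q := dist_nonneg
  have n2 : 0 ≤ dist q y := dist_nonneg
  set F : ℝ → X := fun s => if s ≤ dist x q then f s else k (s - dist x q) with hF
  have F1 : ∀ s, s ≤ dist x q → F s = f s := fun s hs => by simp [hF, hs]
  have F2 : ∀ s, dist x q ≤ s → F s = k (s - dist x q) := by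
    intro s hs
    rcases hs.eq_or_lt with rfl | hs
    · simp [hF, f1, k0]
    · simp [hF, not_le.2 hs]
  have key : ∀ s ∈ Set.Icc (0 : ℝ) (dist x y), ∀ t ∈ Set.Icc (0 : ℝ) (dist x y), s ≤ t →
      dist (F s) (F t) = |s - t| := by
    intro s hs t ht hst
    rcases le_total t (dist x q) with h1 | h1
    · rw [F1 s (hst.trans h1), F1 t h1]
      exact fd s ⟨hs.1, hst.trans h1⟩ t ⟨ht.1, h1⟩
    rcases le_total (dist x q) s with h2 | h2
    · rw [F2 s h2, F2 t h1, kd _ ⟨by linarith, by linarith [hs.2]⟩ _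
        ⟨by linarith, by linarith [ht.2]⟩]
      congr 1
      ring
    · rw [F1 s h2, F2 t h1]
      have a1 := fd 0 ⟨le_rfl, n1⟩ s ⟨hs.1, h2⟩
      have a2 := fd s ⟨hs.1, h2⟩ (dist x q) ⟨n1, le_rfl⟩
      have hm : t - dist x q ∈ Set.Icc (0 : ℝ) (dist q y) := ⟨by linarith, by linarith [ht.2]⟩
      have b1 := kd 0 ⟨le_rfl, n2⟩ _ hm
      have b2 := kd _ hm (dist q y) ⟨n2, le_rfl⟩
      rw [f0, abs_of_nonpos (by linarith [hs.1])] at a1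
      rw [f1, abs_of_nonpos (by linarith)] at a2
      rw [k0, abs_of_nonpos (by linarith [hm.1])] at b1
      rw [k1, abs_of_nonpos (by linarith [hm.2])] at b2
      rw [abs_of_nonpos (by linarith)]
      have t1 := dist_triangle (f s) q (k (t - dist x q))
      have t2 := dist_triangle4 x (f s) (k (t - dist x q)) y
      linarith
  refine ⟨_, ⟨F, ⟨?_, ?_, ?_⟩, rfl⟩, dist x q, ⟨n1, by linarith⟩, ?_⟩
  · rw [F1 0 n1, f0]
  · rw [F2 _ (by linarith), ← hq, add_sub_cancel_left, k1]
  · intro s hs t ht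
    rcases le_total s t with hst | hst
    · exact key s hs t ht hst
    · rw [dist_comm, abs_sub_comm]
      exact key t ht s hs hst
  · rw [F1 _ le_rfl, f1]

/-- If a geodesic `[u, A c]` passes `η`-close to `A b` and `[w, u]` stays away from the line, then
slimness makes `[w, A c]` pass `(η + δ)`-close to `A b` too, so that side is long. -/
theorem dist_ge_of_close {X : Type*} [MetricSpace X] {δ : ℝ}
    (hgeo : GeodesicSpace X) (hslim : SlimTriangles X δ) {A : ℝ → X} (hA : Isometry A)
    {u w : X} {L η b c : ℝ} (hη : η ≤ δ) {σ τ : Set X}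
    (hσ : IsGeodesic σ u (A c)) (hτ : IsGeodesic τ w u)
    (hτA : ∀ q ∈ τ, ∀ t, 2 * δ < dist q (A t)) (hw : ∀ t, L ≤ dist w (A t))
    {v : X} (hv : v ∈ σ) (hvb : dist v (A b) ≤ η) :
    L + |b - c| - 2 * η - 2 * δ ≤ dist w (A c) := by
  obtain ⟨ρ, hρ⟩ := hgeo (A c) w
  obtain ⟨q, hq, hvq⟩ := hslim u (A c) w σ ρ τ hσ hρ hτ v hv
  rw [dist_comm] at hvq
  have hqb := dist_triangle q v (A b)
  rcases hq with hq | hq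
  · have e := hρ.symm.dist_add_dist hq
    have e1 := dist_triangle w q (A b)
    have e2 := dist_triangle_left (A b) (A c) q
    rw [hA.dist_eq, Real.dist_eq] at e2
    linarith [hw b]
  · linarith [hτA q hq b]

/-- The points `u` and `w` have projections `A a` and `A (a + E)`, and `w` sits relative to
`A (a + E)` as `u` does relative to `A a`; the sign of `E` is arbitrary. If `[w, u]` stays away from
the line, then no geodesic from `u` to `A (a + 2E)` passes `δ`-close to the projection of `u`. -/
theorem not_close_of_translate {X : Type*} [MetricSpace X] {δ : ℝ} (hδ : 0 < δ)
    (hgeo : GeodesicSpace X) (hslim : SlimTriangles X δ) {A : ℝ → X} (hA : Isometry A)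
    {u w : X} {L a E : ℝ} (hE : 4 * δ ≤ |E|) {σ τ : Set X}
    (hσ : IsGeodesic σ u (A (a + 2 * E))) (hτ : IsGeodesic τ w u)
    (hτA : ∀ q ∈ τ, ∀ t, 2 * δ < dist q (A t)) (hw : ∀ t, L ≤ dist w (A t))
    (hu : dist u (A a) = L) (huw : ∀ s, dist w (A (s + E)) = dist u (A s))
    {v : X} (hv : v ∈ σ) : δ < dist v (A a) := by
  by_contra! hva
  have hAE : dist (A a) (A (a + E)) = |E| := by
    rw [hA.dist_eq, Real.dist_eq, sub_add_cancel_left, abs_neg]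
  have hle := dist_triangle u (A a) (A (a + E))
  rw [hAE, hu] at hle
  rcases hle.eq_or_lt with heq | hlt
  · obtain ⟨σ', hσ', hmem⟩ := exists_isGeodesic_mem hgeo (x := u) (y := A (a + E)) (q := A a)
      (by rw [hAE, hu, heq])
    have := dist_ge_of_close hgeo hslim hA (b := a) hδ.le hσ' hτ hτA hw hmem (dist_self _).le
    rw [huw, hu, sub_add_cancel_left, abs_neg] at this
    linarith
  · have := dist_ge_of_close hgeo hslim hA (b := a) le_rfl hσ hτ hτA hw hv hva
    rw [show a + 2 * E = a + E + E by ring, huw, show a - (a + E + E) = -(2 * E) by ring, abs_neg,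
      abs_mul, abs_two] at this
    linarith

theorem exists_nearest_point {X : Type*} [MetricSpace X] {A : ℝ → X} (hA : Isometry A) (x : X) :
    ∃ t₀, dist x (A t₀) = infDist x (Set.range A) := by
  have hlim : Tendsto (fun t => dist x (A t)) (cocompact ℝ) atTop := by
    refine tendsto_atTop_mono (f := fun t => dist t 0 - dist x (A 0)) ?_ ?_
    · intro t
      have := dist_triangle_left (A t) (A 0) x
      rw [hA.dist_eq] at this
      linarith
    · exact tendsto_atTop_add_const_right _ _ (tendsto_dist_left_cocompact_atTop 0 |>.congr
        fun t => dist_comm _ _)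
  obtain ⟨t₀, ht₀⟩ := (continuous_const.dist hA.continuous).exists_forall_le hlim
  refine ⟨t₀, le_antisymm ?_ (infDist_le_dist_of_mem ⟨t₀, rfl⟩)⟩
  rw [le_infDist (Set.range_nonempty A)]
  rintro _ ⟨t, rfl⟩
  exact ht₀ t

theorem far_points_moved_far
    (δ ε : ℝ) (hδ : 0 < δ) (hε : 0 < ε)
    (X : Type*) [MetricSpace X]
    (hgeo : GeodesicSpace X) (hslim : SlimTriangles X δ)
    (h : X → X) (hiso : Isometry h)
    (A : ℝ → X) (hA : Isometry A)
    (ℓ : ℝ) (hℓ : ε ≤ ℓ) (htrans : ∀ t : ℝ, h (A t) = A (t + ℓ))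
    (x : X) (L : ℝ) (hL : L = infDist x (Set.range A)) (hL3 : 3 * δ ≤ L) :
    2 * L - 6 * δ ≤ dist x (h^[⌈2 * δ / ε⌉₊] x) := by
  have hit : ∀ n : ℕ, Isometry (h^[n]) ∧ ∀ t, h^[n] (A t) = A (t + n * ℓ) := by
    intro n
    induction n with
    | zero => exact ⟨isometry_id, fun t => by simp⟩
    | succ n ih =>
      rw [Function.iterate_succ']
      refine ⟨hiso.comp ih.1, fun t => ?_⟩
      rw [Function.comp_apply, ih.2, htrans]
      congr 1
      push_cast
      ring
  have hD : 2 * δ ≤ (⌈2 * δ / ε⌉₊ : ℝ) * ℓ := by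
    have h1 := (div_le_iff₀ hε).1 (Nat.le_ceil (2 * δ / ε))
    exact h1.trans (mul_le_mul_of_nonneg_left hℓ (Nat.cast_nonneg _))
  obtain ⟨hg, hgA⟩ := hit ⌈2 * δ / ε⌉₊
  generalize h^[⌈2 * δ / ε⌉₊] = g at hg hgA ⊢
  generalize (⌈2 * δ / ε⌉₊ : ℝ) * ℓ = D at hD hgA
  by_contra! hlt
  obtain ⟨t₀, ht₀⟩ := exists_nearest_point hA x
  rw [← hL] at ht₀
  have hx : ∀ t, L ≤ dist x (A t) := fun t => hL ▸ infDist_le_dist_of_mem ⟨t, rfl⟩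
  have hgd : ∀ y s, dist (g y) (A (s + D)) = dist y (A s) := fun y s => by
    rw [← hgA, hg.dist_eq]
  have hgL : ∀ y, (∀ t, L ≤ dist y (A t)) → ∀ t, L ≤ dist (g y) (A t) := by
    intro y hy t
    have := hgd y (t - D)
    rw [sub_add_cancel] at this
    exact this ▸ hy _
  have hfar : ∀ y, (∀ t, L ≤ dist y (A t)) → dist y (g y) < 2 * L - 6 * δ →
      ∀ σ, IsGeodesic σ y (g y) → ∀ q ∈ σ, ∀ t, 3 * δ < dist q (A t) := by
    intro y hy hlt σ hσ q hq t
    have e := hσ.dist_add_dist hq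
    have e1 := dist_triangle y q (A t)
    have e2 := dist_triangle (g y) q (A t)
    rw [dist_comm (g y) q] at e2
    linarith [hy t, hgL y hy t]
  obtain ⟨τ, hτ⟩ := hgeo x (g (g x))
  have hτA : ∀ q ∈ τ, ∀ t, 2 * δ < dist q (A t) := by
    intro q hq t
    obtain ⟨σ₁, hσ₁⟩ := hgeo x (g x)
    obtain ⟨σ₂, hσ₂⟩ := hgeo (g x) (g (g x))
    obtain ⟨r, hr, hqr⟩ := hslim _ _ _ τ σ₂ σ₁ hτ hσ₂.symm hσ₁.symm q hq
    have hr3 : 3 * δ < dist r (A t) := by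
      rcases hr with hr | hr
      · exact hfar (g x) (hgL x hx) (by rwa [hg.dist_eq]) _ hσ₂ r hr t
      · exact hfar x hx hlt _ hσ₁ r hr t
    have := dist_triangle_left r (A t) q
    linarith
  have hgg : ∀ s, dist (g (g x)) (A (s + 2 * D)) = dist x (A s) := fun s => by
    rw [show s + 2 * D = s + D + D by ring, hgd, hgd]
  obtain ⟨σp, hσp⟩ := hgeo x (A (t₀ + 2 * (2 * D)))
  obtain ⟨σm, hσm⟩ := hgeo x (A (t₀ - 2 * (2 * D)))
  -- A geodesic along the line, containing the projection `A t₀` of `x`.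
  obtain ⟨α, hα, hmem⟩ := exists_isGeodesic_mem hgeo (x := A (t₀ - 2 * (2 * D)))
    (y := A (t₀ + 2 * (2 * D))) (q := A t₀) (by
      simp only [hA.dist_eq, Real.dist_eq]
      rw [abs_of_nonpos (by linarith), abs_of_nonpos (by linarith), abs_of_nonpos (by linarith)]
      ring)
  obtain ⟨v, hv, hvd⟩ := hslim _ _ _ α σp σm hα hσp.symm hσm _ hmem
  rw [dist_comm] at hvd
  rcases hv with hv | hv
  · have := not_close_of_translate hδ hgeo hslim hA (E := 2 * D)
      (by rw [abs_of_nonneg (by linarith)]; linarith) hσp hτ.symm hτA (hgL _ (hgL x hx)) ht₀ hgg hv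
    linarith
  · -- Here `g²` carries `[x, A (t₀ - 4D)]` to a geodesic from `g² x` to `A (t₀ - 2D)`, and the
    -- roles of `x` and `g² x` are exchanged.
    have hσ' := (hσm.image hg).image hg
    rw [hgA, hgA, show t₀ - 2 * (2 * D) + D + D = t₀ + 2 * D + 2 * (-(2 * D)) by ring] at hσ'
    have := not_close_of_translate hδ hgeo hslim hA (E := -(2 * D)) (L := L)
      (by rw [abs_neg, abs_of_nonneg (by linarith)]; linarith) hσ' hτ hτA hx
      (by rw [hgg, ht₀]) (fun s => by rw [← hgg, neg_add_cancel_right])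
      (Set.mem_image_of_mem g (Set.mem_image_of_mem g hv))
    rw [show t₀ + 2 * D = t₀ + D + D by ring, hgd, hgd] at this
    linarith
end

section
/- Let δ > 0 and ε > 0 be real numbers, let X be a geodesic metric space with δ-slim triangles, and let h be an isometry of X. Suppose A : ℝ → X is an isometric embedding (a geodesic line) which is translated by h, i.e. there is a real number ℓ ≥ ε with h(A(t)) = A(t + ℓ) for all t ∈ ℝ. Set m = ⌈2δ/ε⌉. Then for every point x ∈ X with L = dist(x, A(ℝ)) ≥ 3δ, one has d(x, h·x) ≥ (2L − 6δ)/m. -/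
/-!
Put `H = h^m`, which translates the line `A` by `T = m ℓ ≥ 2δ`, and `x₁ = H x`, `x₂ = H² x`.

The key point (`exists_near_line`) is that a geodesic `[x, y]` passes within `2δ` of `A` as soon as
`y` sits over `A` like `x` does, shifted by more than `3δ`. Otherwise, applying slimness to the
triangles `(A(-N), A(N), x)` and `(A(N), x, y)`, every `A(t)` with `|t| ≤ N` is `δ`-close to
`[x, A(-N)]` or `2δ`-close to `[y, A(N)]`. By connectedness of `[-N, N]` both alternatives hold (in
the form of inequalities between distances) at a common `t`. For `N` large the distances to `A(±N)`
are, up to a constant, almost the Busemann functions of the two ends of `A`, and comparing their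
values at `x` and `y` bounds the shift by `3δ`.

The shift from `x` to `x₂` is `2T ≥ 4δ`, so `[x, x₂]` contains a point `2δ`-close to `A`. By
slimness this point is `δ`-close to `[x, x₁]` or `[x₁, x₂]`. Either segment has length `d(x, Hx)`
and endpoints at distance `L` from `A`, while containing a point `3δ`-close to `A`; hence
`d(x, Hx) ≥ 2(L - 3δ)`. Finally `d(x, h^m x) ≤ m d(x, h x)`.
-/

open Metric Filter

lemma IsGeodesic.dist_add {X : Type*} [MetricSpace X] {σ : Set X} {x y z : X}
    (hσ : IsGeodesic σ x y) (hz : z ∈ σ) : dist x z + dist z y = dist x y := by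
  obtain ⟨f, ⟨h0, h1, hf⟩, rfl⟩ := hσ
  obtain ⟨s, hs, rfl⟩ := hz
  have e1 := hf 0 ⟨le_rfl, dist_nonneg⟩ s hs
  have e2 := hf s hs (dist x y) ⟨dist_nonneg, le_rfl⟩
  rw [h0, abs_of_nonpos (by linarith [hs.1])] at e1
  rw [h1, abs_of_nonpos (by linarith [hs.2])] at e2
  linarith

lemma isGeodesic_image_line {X : Type*} [MetricSpace X] {A : ℝ → X} (hA : Isometry A)
    {a b : ℝ} (hab : a ≤ b) : IsGeodesic (A '' Set.Icc a b) (A a) (A b) := by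
  have hd : dist (A a) (A b) = b - a := by
    rw [hA.dist_eq, Real.dist_eq, abs_of_nonpos (by linarith)]; ring
  refine ⟨fun s => A (a + s), ⟨by simp, by simp [hd], ?_⟩, ?_⟩
  · intro s _ t _
    rw [hA.dist_eq, Real.dist_eq]
    congr 1
    ring
  · rw [hd]
    ext z
    constructor
    · rintro ⟨t, ht, rfl⟩
      exact ⟨t - a, ⟨by linarith [ht.1], by linarith [ht.2]⟩, by simp⟩
    · rintro ⟨t, ht, rfl⟩
      exact ⟨a + t, ⟨by linarith [ht.1], by linarith [ht.2]⟩, rfl⟩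

/-- Far out on the line, `d(x, A(N)) - N` is within `η` of its infimum, the Busemann function
of `A` at `x`. -/
lemma exists_busemann_approx {X : Type*} [MetricSpace X] {A : ℝ → X} (hA : Isometry A)
    (x : X) {η : ℝ} (hη : 0 < η) :
    ∃ N₀ : ℝ, ∀ N, N₀ ≤ N → ∀ s, dist x (A N) - N ≤ dist x (A s) - s + η := by
  have hbdd : BddBelow (Set.range fun t => dist x (A t) - t) := by
    refine ⟨-dist x (A 0), ?_⟩
    rintro _ ⟨t, rfl⟩
    have h1 := dist_triangle_left (A 0) (A t) x
    rw [hA.dist_eq, Real.dist_eq] at h1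
    have h2 := neg_le_abs (0 - t)
    dsimp only
    linarith
  obtain ⟨N₀, hN₀⟩ := exists_lt_of_ciInf_lt
    (lt_add_of_pos_right (⨅ t, (dist x (A t) - t)) hη)
  refine ⟨N₀, fun N hN s => ?_⟩
  have h1 := ciInf_le hbdd s
  have h2 := dist_triangle x (A N₀) (A N)
  rw [hA.dist_eq N₀, Real.dist_eq, abs_of_nonpos (by linarith)] at h2
  linarith

/-- If `y` is placed relative to `A` as `x` is, but shifted by more than `3δ`, then any geodesic
from `x` to `y` comes within `2δ` of `A`. -/
lemma exists_near_line {X : Type*} [MetricSpace X] {δ : ℝ}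
    (hgeo : GeodesicSpace X) (hslim : SlimTriangles X δ)
    {A : ℝ → X} (hA : Isometry A) {x y : X} {T : ℝ} (hT : 3 * δ < T)
    (hxy : ∀ t, dist y (A (t + T)) = dist x (A t)) {σ : Set X} (hσ : IsGeodesic σ x y) :
    ∃ t, ∃ z ∈ σ, dist (A t) z ≤ 2 * δ := by
  by_contra! hcon
  obtain ⟨η, hη, hηT⟩ : ∃ η : ℝ, 0 < η ∧ 3 * δ + η < T :=
    ⟨(T - 3 * δ) / 2, by linarith, by linarith⟩
  have hA' : Isometry fun t : ℝ => A (-t) := hA.comp (IsometryEquiv.neg ℝ).isometry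
  obtain ⟨N₁, hN₁⟩ := exists_busemann_approx hA y hη
  obtain ⟨N₂, hN₂⟩ := exists_busemann_approx hA' x hη
  obtain ⟨N, hN0, hNN₁, hNN₂⟩ : ∃ N : ℝ, 0 ≤ N ∧ N₁ ≤ N ∧ N₂ ≤ N :=
    ⟨max 0 (max N₁ N₂), by simp, by simp, by simp⟩
  obtain ⟨σb, hσb⟩ := hgeo (A N) x
  obtain ⟨σa, hσa⟩ := hgeo x (A (-N))
  obtain ⟨σc, hσc⟩ := hgeo y (A N)
  have hδ : 0 ≤ δ := by
    obtain ⟨q, -, hq⟩ := hslim _ _ _ _ _ _ (isGeodesic_image_line hA (by linarith : -N ≤ N))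
      hσb hσa (A N) ⟨N, ⟨by linarith, le_rfl⟩, rfl⟩
    exact dist_nonneg.trans hq
  -- What remains of `δ`-closeness to `[x, A(-N)]`, respectively `2δ`-closeness to `[y, A(N)]`.
  let F₁ : Set ℝ := {t | dist x (A t) + (t + N) - 2 * δ ≤ dist x (A (-N))}
  let F₂ : Set ℝ := {t | dist y (A t) + (N - t) - 4 * δ ≤ dist y (A N)}
  have hc := hA.continuous
  have hF₁ : IsClosed F₁ := isClosed_le (by fun_prop) (by fun_prop)
  have hF₂ : IsClosed F₂ := isClosed_le (by fun_prop) (by fun_prop)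
  have hcover : Set.Icc (-N) N ⊆ F₁ ∪ F₂ := by
    intro t ht
    obtain ⟨q, hq, hqd⟩ := hslim _ _ _ _ _ _
      (isGeodesic_image_line hA (by linarith : -N ≤ N)) hσb hσa (A t) ⟨t, ht, rfl⟩
    rcases hq with hq | hq
    · right
      obtain ⟨r, hr, hrd⟩ := hslim _ _ _ _ _ _ hσb hσ hσc q hq
      have htr := dist_triangle (A t) q r
      rcases hr with hr | hr
      · exact absurd (hcon t r hr) (by linarith)
      · have e := hσc.dist_add hr
        have h1 := dist_triangle_right y (A t) r
        have h2 := dist_triangle (A t) r (A N)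
        rw [hA.dist_eq t, Real.dist_eq, abs_of_nonpos (by linarith [ht.2])] at h2
        change dist y (A t) + (N - t) - 4 * δ ≤ dist y (A N)
        linarith
    · left
      have e := hσa.dist_add hq
      have h1 := dist_triangle_right x (A t) q
      have h2 := dist_triangle (A t) q (A (-N))
      rw [hA.dist_eq t, Real.dist_eq, abs_of_nonneg (by linarith [ht.1])] at h2
      change dist x (A t) + (t + N) - 2 * δ ≤ dist x (A (-N))
      linarith
  obtain ⟨t, -, ht₁, ht₂⟩ := isPreconnected_closed_iff.1 (isPreconnected_Icc (a := -N) (b := N))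
    F₁ F₂ hF₁ hF₂ hcover
    ⟨-N, ⟨le_rfl, by linarith⟩, by
      change dist x (A (-N)) + (-N + N) - 2 * δ ≤ dist x (A (-N)); linarith⟩
    ⟨N, ⟨by linarith, le_rfl⟩, by
      change dist y (A N) + (N - N) - 4 * δ ≤ dist y (A N); linarith⟩
  change dist x (A t) + (t + N) - 2 * δ ≤ dist x (A (-N)) at ht₁
  change dist y (A t) + (N - t) - 4 * δ ≤ dist y (A N) at ht₂
  have e₁ := hN₁ N hNN₁ (t + T)
  have e₂ := hN₂ N hNN₂ (-(t - T))
  have e₃ := hxy (t - T)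
  rw [hxy] at e₁
  rw [sub_add_cancel] at e₃
  simp only [neg_neg] at e₂
  linarith

/-- A geodesic whose endpoints are at distance at least `L` from `S`, and which contains a point
at distance at most `D` from `S`, has length at least `2 (L - D)`. -/
lemma IsGeodesic.two_mul_le_dist {X : Type*} [MetricSpace X] {σ S : Set X} {x y z a : X} {L D : ℝ}
    (hσ : IsGeodesic σ x y) (hz : z ∈ σ) (ha : a ∈ S) (hx : L ≤ infDist x S)
    (hy : L ≤ infDist y S) (haz : dist a z ≤ D) : 2 * (L - D) ≤ dist x y := by
  have e := hσ.dist_add hz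
  have h1 := infDist_le_dist_of_mem (x := x) ha
  have h2 := infDist_le_dist_of_mem (x := y) ha
  have h3 := dist_triangle_right x a z
  have h4 := dist_triangle_right y a z
  rw [dist_comm y z] at h4
  linarith

theorem far_points_moved_far_single_step
    (δ ε : ℝ) (hδ : 0 < δ) (hε : 0 < ε)
    (X : Type*) [MetricSpace X]
    (hgeo : GeodesicSpace X) (hslim : SlimTriangles X δ)
    (h : X → X) (hiso : Isometry h)
    (A : ℝ → X) (hA : Isometry A)
    (ℓ : ℝ) (hℓ : ε ≤ ℓ) (htrans : ∀ t : ℝ, h (A t) = A (t + ℓ))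
    (x : X) (L : ℝ) (hL : L = infDist x (Set.range A)) (hL3 : 3 * δ ≤ L) :
    (2 * L - 6 * δ) / (⌈2 * δ / ε⌉₊ : ℝ) ≤ dist x (h x) := by
  have hiter : ∀ n : ℕ, ∀ t, h^[n] (A t) = A (t + n * ℓ) := by
    intro n
    induction n with
    | zero => simp
    | succ k ih =>
      intro t
      rw [Function.iterate_succ_apply', ih, htrans]
      push_cast
      congr 1
      ring
  have hisoIter : ∀ n : ℕ, Isometry h^[n] := by
    intro n
    induction n with
    | zero => exact isometry_id
    | succ k ih => exact ih.comp hiso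
  have hinf : ∀ n : ℕ, L ≤ infDist (h^[n] x) (Set.range A) := by
    intro n
    refine (le_infDist (Set.range_nonempty A)).2 ?_
    rintro _ ⟨t, rfl⟩
    have e : A t = h^[n] (A (t - n * ℓ)) := by rw [hiter]; simp
    rw [e, (hisoIter n).dist_eq, hL]
    exact infDist_le_dist_of_mem ⟨_, rfl⟩
  have hsteps : ∀ n : ℕ, dist x (h^[n] x) ≤ n * dist x (h x) := by
    intro n
    induction n with
    | zero => simp
    | succ k ih =>
      have h1 := dist_triangle x (h^[k] x) (h^[k + 1] x)
      rw [Function.iterate_succ_apply, (hisoIter k).dist_eq] at h1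
      rw [Function.iterate_succ_apply]
      push_cast
      linarith
  set m : ℕ := ⌈2 * δ / ε⌉₊ with hm
  have hm0 : (0 : ℝ) < m := by
    rw [hm]; exact_mod_cast Nat.ceil_pos.2 (by positivity)
  have hmT : 2 * δ ≤ m * ℓ := by
    have h1 : 2 * δ / ε ≤ m := Nat.le_ceil _
    rw [div_le_iff₀ hε] at h1
    exact h1.trans (mul_le_mul_of_nonneg_left hℓ hm0.le)
  have h12 : dist (h^[m] x) (h^[m + m] x) = dist x (h^[m] x) := by
    rw [Function.iterate_add_apply, (hisoIter m).dist_eq]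
  have hmain : 2 * (L - 3 * δ) ≤ dist x (h^[m] x) := by
    obtain ⟨σ, hσ⟩ := hgeo x (h^[m + m] x)
    obtain ⟨σ₁, hσ₁⟩ := hgeo (h^[m] x) x
    obtain ⟨σ₂, hσ₂⟩ := hgeo (h^[m + m] x) (h^[m] x)
    obtain ⟨t, z, hz, htz⟩ := exists_near_line hgeo hslim hA (T := ((m + m : ℕ) : ℝ) * ℓ)
      (by push_cast; linarith)
      (fun t => by rw [← hiter, (hisoIter _).dist_eq]) hσ
    obtain ⟨w, hw, hzw⟩ := hslim _ _ _ _ _ _ hσ hσ₂ hσ₁ z hz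
    have htw : dist (A t) w ≤ 3 * δ := by linarith [dist_triangle (A t) z w]
    rcases hw with hw | hw
    · have := hσ₂.two_mul_le_dist hw (Set.mem_range_self t) (hinf _) (hinf _) htw
      rwa [dist_comm, h12] at this
    · have := hσ₁.two_mul_le_dist hw (Set.mem_range_self t) (hinf _) hL.le htw
      rwa [dist_comm] at this
  rw [div_le_iff₀ hm0]
  linarith [hsteps m]
end

section
/- Let δ > 0, ε > 0 and C ≥ 0 be real numbers, let X be a geodesic metric space with δ-slim triangles, and let h be an isometry of X. Suppose A : ℝ → X is an isometric embedding (a geodesic line) which is translated by h, i.e. there is a real number ℓ ≥ ε with h(A(t)) = A(t + ℓ) for all t ∈ ℝ. Then every point x ∈ X with d(x, h·x) ≤ C satisfies dist(x, A(ℝ)) ≤ max(3δ, (C·⌈2δ/ε⌉ + 6δ)/2). In other words, the distance a point is moved by h gives an upper bound on its distance to the geodesic line translated by h, with the bound depending only on δ, ε and C. -/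
/-!
Let `n = ⌈2δ/ε⌉`, `g = h^n` and `τ = nℓ ≥ 2δ`, so that `g` translates `A` by `τ` and moves `x` by at
most `nC`. With `D = dist(x, A)`, it suffices to show that `D > 3δ` and `d(x, gx) < 2D - 6δ` are
incompatible (`no_short_displacement`).

Write `f(t) = d(x, A t)`. Since `f(t) - t` is nonincreasing and bounded below, `f(T + τ) - f(T)` is
`τ` up to a small error `η` for large `T` (`exists_almost_busemann`), and likewise towards `-∞`.
Let `γ` be a geodesic from `x` to a far point `A(T + τ)`. Some point `γ(ρ)` is `δ`-close both to `A`
and to a geodesic from `x` to `A(-S)` (`slim_center`). The points `γ(ρ)` and `γ(ρ - δ)` are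
`2δ`-close to `A`, hence not `δ`-close to `[x, gx]`: a point of `A` that is `3δ`-close to `[x, gx]`
would give `2D ≤ d(x, gx) + 6δ`. By slimness of the triangle `x, gx, A(T + τ)` they are therefore
`δ`-close to `g γ'`, where `γ'` is any chosen geodesic from `x` to `A(T)`.

Comparing distances to both ends of `A`, closeness of `γ(ρ - δ)` to `g γ'` makes `γ(ρ - δ)` at least
`2δ - 2η` further from `A(-S)` than a point at distance `ρ - δ` from `x` on a geodesic to `A(-S)`
would be. Closeness of `γ(ρ)` to `g γ'` makes `γ'` stay nearly on course towards `A(-S)` up to time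
`ρ - δ`. If `γ'` was itself obtained in this way, with parameter `ρ'`, the two facts together force
`ρ ≤ ρ' - δ/2` (`descent_step`). Iterating, the parameters `ρ` become negative, which is absurd.
-/

open Metric Filter

/-! ### Geodesic segments and slim triangles -/

section Geodesics

variable {X : Type*} [MetricSpace X]

lemma IsGeodesicSegment.symm {f : ℝ → X} {x y : X} (hf : IsGeodesicSegment f x y) :
    IsGeodesicSegment (fun s => f (dist x y - s)) y x := by
  obtain ⟨h0, h1, h2⟩ := hf
  refine ⟨by simpa using h1, by simpa [dist_comm y x] using h0, ?_⟩
  intro s hs t ht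
  rw [dist_comm y x] at hs ht
  have := h2 (dist x y - s) ⟨by linarith [hs.2], by linarith [hs.1]⟩
    (dist x y - t) ⟨by linarith [ht.2], by linarith [ht.1]⟩
  rw [this, abs_sub_comm]
  congr 1
  ring

lemma IsGeodesicSegment.map {f : ℝ → X} {x y : X} (hf : IsGeodesicSegment f x y)
    {g : X → X} (hg : Isometry g) : IsGeodesicSegment (fun s => g (f s)) (g x) (g y) := by
  obtain ⟨h0, h1, h2⟩ := hf
  refine ⟨by simp [h0], by simp [hg.dist_eq, h1], ?_⟩
  intro s hs t ht
  rw [hg.dist_eq] at hs ht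
  simpa [hg.dist_eq] using h2 s hs t ht

lemma IsGeodesicSegment.dist_left {f : ℝ → X} {x y : X} (hf : IsGeodesicSegment f x y)
    {s : ℝ} (hs : s ∈ Set.Icc 0 (dist x y)) : dist x (f s) = s := by
  have := hf.2.2 0 ⟨le_rfl, dist_nonneg⟩ s hs
  rw [hf.1] at this
  rw [this, zero_sub, abs_neg, abs_of_nonneg hs.1]

lemma IsGeodesicSegment.dist_right {f : ℝ → X} {x y : X} (hf : IsGeodesicSegment f x y)
    {s : ℝ} (hs : s ∈ Set.Icc 0 (dist x y)) : dist (f s) y = dist x y - s := by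
  have := hf.2.2 s hs (dist x y) ⟨dist_nonneg, le_rfl⟩
  rw [hf.2.1] at this
  rw [this, abs_sub_comm, abs_of_nonneg (by linarith [hs.2])]

lemma IsGeodesicSegment.continuousOn {f : ℝ → X} {x y : X} (hf : IsGeodesicSegment f x y) :
    ContinuousOn f (Set.Icc 0 (dist x y)) := by
  have : LipschitzOnWith 1 f (Set.Icc 0 (dist x y)) := by
    refine LipschitzOnWith.of_dist_le_mul fun s hs t ht => ?_
    rw [hf.2.2 s hs t ht, Real.dist_eq]
    simp
  exact this.continuousOn

lemma isGeodesicSegment_line {A : ℝ → X} (hA : Isometry A) {s t : ℝ} (hst : s ≤ t) :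
    IsGeodesicSegment (fun r => A (s + r)) (A s) (A t) := by
  have hd : dist (A s) (A t) = t - s := by
    rw [hA.dist_eq, Real.dist_eq, abs_sub_comm, abs_of_nonneg (by linarith)]
  refine ⟨by simp, by simp [hd], ?_⟩
  intro a _ b _
  rw [hA.dist_eq, Real.dist_eq]
  congr 1
  ring

lemma GeodesicSpace.exists_segment (hgeo : GeodesicSpace X) (x y : X) :
    ∃ f, IsGeodesicSegment f x y := by
  obtain ⟨_, f, hf, _⟩ := hgeo x y
  exact ⟨f, hf⟩

/-- Slimness of a triangle `x, y, z`, with sides parametrized as `x → y`, `x → z` and `z → y`. -/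
lemma SlimTriangles.side {δ : ℝ} (hslim : SlimTriangles X δ) {x y z : X} {f a k : ℝ → X}
    (hf : IsGeodesicSegment f x y) (ha : IsGeodesicSegment a x z) (hk : IsGeodesicSegment k z y)
    {r : ℝ} (hr : r ∈ Set.Icc 0 (dist x y)) :
    (∃ s ∈ Set.Icc 0 (dist x z), dist (f r) (a s) ≤ δ) ∨
      ∃ s ∈ Set.Icc 0 (dist z y), dist (f r) (k s) ≤ δ := by
  obtain ⟨q, hq, hd⟩ := hslim x y z _ _ _ ⟨f, hf, rfl⟩ ⟨_, hk.symm, rfl⟩ ⟨_, ha.symm, rfl⟩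
    (f r) ⟨r, hr, rfl⟩
  rcases hq with ⟨s, hs, rfl⟩ | ⟨s, hs, rfl⟩
  · rw [dist_comm y z] at hs
    exact Or.inr ⟨_, ⟨by linarith [hs.2], by linarith [hs.1]⟩, hd⟩
  · rw [dist_comm z x] at hs
    exact Or.inl ⟨_, ⟨by linarith [hs.2], by linarith [hs.1]⟩, hd⟩

/-- By connectedness, some point of a side is `δ`-close to both other sides. -/
lemma slim_center {δ : ℝ} (hslim : SlimTriangles X δ) {x y z : X} {f a k : ℝ → X}
    (hf : IsGeodesicSegment f x y) (ha : IsGeodesicSegment a x z) (hk : IsGeodesicSegment k z y) :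
    ∃ r ∈ Set.Icc 0 (dist x y), (∃ s ∈ Set.Icc 0 (dist x z), dist (f r) (a s) ≤ δ) ∧
      ∃ s ∈ Set.Icc 0 (dist z y), dist (f r) (k s) ≤ δ := by
  have hca : IsCompact (a '' Set.Icc 0 (dist x z)) := isCompact_Icc.image_of_continuousOn
    ha.continuousOn
  have hck : IsCompact (k '' Set.Icc 0 (dist z y)) := isCompact_Icc.image_of_continuousOn
    hk.continuousOn
  have hx : x ∈ a '' Set.Icc 0 (dist x z) := ⟨0, ⟨le_rfl, dist_nonneg⟩, ha.1⟩
  have hy : y ∈ k '' Set.Icc 0 (dist z y) := ⟨dist z y, ⟨dist_nonneg, le_rfl⟩, hk.2.1⟩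
  have hcont : ContinuousOn (fun r => infDist (f r) (a '' Set.Icc 0 (dist x z)) -
      infDist (f r) (k '' Set.Icc 0 (dist z y))) (Set.Icc 0 (dist x y)) :=
    ((continuous_infDist_pt _).comp_continuousOn hf.continuousOn).sub
      ((continuous_infDist_pt _).comp_continuousOn hf.continuousOn)
  have hmem := intermediate_value_Icc (dist_nonneg (x := x) (y := y)) hcont
  obtain ⟨r, hr, hr0⟩ := hmem (show (0 : ℝ) ∈ _ by
    refine ⟨?_, ?_⟩
    · have := infDist_nonneg (x := x) (s := k '' Set.Icc 0 (dist z y))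
      simp only [hf.1, infDist_zero_of_mem hx]
      linarith
    · have := infDist_nonneg (x := y) (s := a '' Set.Icc 0 (dist x z))
      simp only [hf.2.1, infDist_zero_of_mem hy]
      linarith)
  have heq := sub_eq_zero.1 hr0
  have hle : infDist (f r) (a '' Set.Icc 0 (dist x z)) ≤ δ := by
    rcases hslim.side hf ha hk hr with ⟨s, hs, hd⟩ | ⟨s, hs, hd⟩
    · exact (infDist_le_dist_of_mem (Set.mem_image_of_mem _ hs)).trans hd
    · rw [heq]
      exact (infDist_le_dist_of_mem (Set.mem_image_of_mem _ hs)).trans hd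
  obtain ⟨_, ⟨s, hs, rfl⟩, h1⟩ := hca.exists_infDist_eq_dist ⟨x, hx⟩ (f r)
  obtain ⟨_, ⟨s', hs', rfl⟩, h2⟩ := hck.exists_infDist_eq_dist ⟨y, hy⟩ (f r)
  exact ⟨r, hr, ⟨s, hs, h1 ▸ hle⟩, s', hs', h2 ▸ heq ▸ hle⟩

/-- Far along the line, the distance from `x` grows at almost unit speed, because
`dist x (A t) - t` is nonincreasing and bounded below. -/
lemma exists_almost_busemann {A : ℝ → X} (hA : Isometry A) (x : X) {τ η : ℝ} (hτ : 0 ≤ τ)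
    (hη : 0 < η) :
    ∃ T₀ : ℝ, 0 ≤ T₀ ∧ ∀ T, T₀ ≤ T → dist x (A T) + τ - η ≤ dist x (A (T + τ)) := by
  set F : ℝ → ℝ := fun t => dist x (A t) - t
  have hlip : ∀ s t, s ≤ t → dist (A s) (A t) = t - s := fun s t hst => by
    rw [hA.dist_eq, Real.dist_eq, abs_sub_comm, abs_of_nonneg (by linarith)]
  have hbdd : BddBelow (F '' Set.Ici 0) := by
    refine ⟨-dist x (A 0), ?_⟩
    rintro _ ⟨t, ht, rfl⟩
    have h1 := hlip 0 t ht
    have h2 := dist_triangle_left (A 0) (A t) x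
    simp only [F]
    linarith
  obtain ⟨_, ⟨T₀, hT₀, rfl⟩, hlt⟩ := exists_lt_of_csInf_lt (s := F '' Set.Ici 0)
    ⟨F 0, 0, le_refl (0 : ℝ), rfl⟩ (lt_add_of_pos_right _ hη)
  refine ⟨T₀, hT₀, fun T hT => ?_⟩
  have h1 := csInf_le hbdd ⟨T + τ, (show (0 : ℝ) ≤ T + τ by
    have : (0 : ℝ) ≤ T₀ := hT₀
    linarith), rfl⟩
  have h2 := hlip T₀ T hT
  have h3 := dist_triangle x (A T₀) (A T)
  simp only [F] at h1 hlt
  linarith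

end Geodesics

/-! ### The descent argument -/

section Descent

variable {X : Type*} [MetricSpace X]

/-- `LateDetour δ A x S₀ T γ ρ`: `ρ - δ` is a time at which the geodesic `γ` from `x` to `A T` is, for
every `S ≥ S₀`, further from `A (-S)` by at least `3δ/2` than a geodesic from `x` to `A (-S)` would be
at that time. The value `3δ/2` is `2δ - 2η` for the error `η = δ/4`. -/
def LateDetour (δ : ℝ) (A : ℝ → X) (x : X) (S₀ T : ℝ) (γ : ℝ → X) (ρ : ℝ) : Prop :=
  ρ - δ ∈ Set.Icc 0 (dist x (A T)) ∧
    ∀ S, S₀ ≤ S → dist x (A (-S)) - (ρ - δ) + 3 * δ / 2 ≤ dist (γ (ρ - δ)) (A (-S))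

/-- If `g` moves `x` too little, each geodesic `γ'` from `x` to a far point `A T` yields a geodesic
from `x` to `A (T + τ)` having a late detour, at least `δ/2` earlier than any late detour of `γ'`. -/
lemma descent_step {δ τ S₀ T₀ T : ℝ} (hδ : 0 < δ) (hτ : 2 * δ ≤ τ)
    (hgeo : GeodesicSpace X) (hslim : SlimTriangles X δ) {g : X → X} (hg : Isometry g)
    {A : ℝ → X} (hA : Isometry A) (hgA : ∀ t, g (A t) = A (t + τ)) {x : X}
    (hD : 3 * δ < infDist x (Set.range A))
    (hshort : dist x (g x) < 2 * infDist x (Set.range A) - 6 * δ)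
    (hT₀ : 0 ≤ T₀) (hS₀ : 0 ≤ S₀)
    (hbT : ∀ T, T₀ ≤ T → dist x (A T) + τ - δ / 4 ≤ dist x (A (T + τ)))
    (hbS : ∀ S, S₀ ≤ S → dist x (A (-S)) + τ - δ / 4 ≤ dist x (A (-(S + τ))))
    (hT : T₀ ≤ T) {γ' : ℝ → X} (hγ' : IsGeodesicSegment γ' x (A T)) :
    ∃ γ ρ, IsGeodesicSegment γ x (A (T + τ)) ∧ LateDetour δ A x S₀ (T + τ) γ ρ ∧
      ∀ ρ', LateDetour δ A x S₀ T γ' ρ' → ρ ≤ ρ' - δ / 2 := by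
  set D := infDist x (Set.range A)
  have hDx : ∀ t, D ≤ dist x (A t) := fun t => infDist_le_dist_of_mem ⟨t, rfl⟩
  have hDgx : ∀ t, D ≤ dist (g x) (A t) := fun t => by
    have := hgA (t - τ)
    rw [sub_add_cancel] at this
    rw [← this, hg.dist_eq]
    exact hDx _
  -- translating back by `g`
  have hback : ∀ y S, dist (g y) (A (-S)) = dist y (A (-(S + τ))) := fun y S => by
    rw [← hg.dist_eq y, hgA]
    congr 2
    ring
  obtain ⟨γ, hγ⟩ := hgeo.exists_segment x (A (T + τ))
  obtain ⟨α, hα⟩ := hgeo.exists_segment x (A (-S₀))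
  obtain ⟨β, hβ⟩ := hgeo.exists_segment x (g x)
  have hgγ' : IsGeodesicSegment (fun s => g (γ' s)) (g x) (A (T + τ)) := by
    have := hγ'.map hg
    rwa [hgA] at this
  have hlen : dist (g x) (A (T + τ)) = dist x (A T) := by rw [← hgA, hg.dist_eq]
  obtain ⟨ρ, hρ, ⟨v, hv, hρv⟩, w, -, hρw⟩ := slim_center hslim hγ hα
    (isGeodesicSegment_line hA (show -S₀ ≤ T + τ by linarith))
  have hγρ := hγ.dist_left hρ
  have hρD : D - δ ≤ ρ := by
    have := dist_triangle x (γ ρ) (A (-S₀ + w))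
    linarith [hDx (-S₀ + w)]
  have hρ' : ρ - δ ∈ Set.Icc 0 (dist x (A (T + τ))) := ⟨by linarith, by linarith [hρ.2]⟩
  have hγγ : dist (γ (ρ - δ)) (γ ρ) = δ := by
    rw [hγ.2.2 _ hρ' _ hρ, abs_of_nonpos (by linarith)]
    ring
  -- points of `γ` that are `2δ`-close to `A` are `δ`-close to `g γ'`, at a controlled time
  have key : ∀ r ∈ Set.Icc 0 (dist x (A (T + τ))), dist (γ r) (A (-S₀ + w)) ≤ 2 * δ →
      ∃ σ ∈ Set.Icc 0 (dist x (A T)), dist (γ r) (g (γ' σ)) ≤ δ ∧ σ ≤ r - δ + δ / 4 := by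
    intro r hr hrw
    rcases hslim.side hγ hβ hgγ' hr with ⟨s, hs, hd⟩ | ⟨s, hs, hd⟩
    · exfalso
      have h1 := hβ.dist_left hs
      have h2 := hβ.dist_right hs
      have h3 := dist_triangle (β s) (γ r) (A (-S₀ + w))
      have h4 := dist_triangle x (β s) (A (-S₀ + w))
      have h5 := dist_triangle (g x) (β s) (A (-S₀ + w))
      rw [dist_comm (β s) (γ r)] at h3
      rw [dist_comm (g x) (β s)] at h5
      linarith [hDx (-S₀ + w), hDgx (-S₀ + w)]
    · refine ⟨s, hlen ▸ hs, hd, ?_⟩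
      have h1 := hγ.dist_right hr
      have h2 := hgγ'.dist_right hs
      rw [hlen] at h2
      have h3 := dist_triangle (γ r) (g (γ' s)) (A (T + τ))
      linarith [hbT T hT]
  obtain ⟨σ, hσ, hσd, hσle⟩ := key ρ hρ (by linarith)
  obtain ⟨σ₁, hσ₁, hσ₁d, hσ₁le⟩ := key (ρ - δ) hρ' (by
    have := dist_triangle (γ (ρ - δ)) (γ ρ) (A (-S₀ + w))
    linarith)
  refine ⟨γ, ρ, hγ, ⟨hρ', fun S hS => ?_⟩, fun ρ' hdet => ?_⟩
  · have h1 := hback (γ' σ₁) S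
    have h2 := dist_triangle_left (g (γ' σ₁)) (A (-S)) (γ (ρ - δ))
    have h3 := dist_triangle x (γ' σ₁) (A (-(S + τ)))
    have h4 := hγ'.dist_left hσ₁
    linarith [hbS S hS]
  · obtain ⟨hmem, hfar⟩ := hdet
    have hfar := hfar (S₀ + τ) (by linarith)
    have h1 := hback (γ' σ) S₀
    have h2 := dist_triangle_left (g (γ' σ)) (A (-S₀)) (γ ρ)
    have h3 := dist_triangle (γ ρ) (α v) (A (-S₀))
    have h4 := hα.dist_right hv
    have h5 := hα.dist_left hv
    have h6 := dist_triangle_right x (γ ρ) (α v)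
    have hvρ := dist_triangle x (α v) (γ ρ)
    rw [dist_comm (α v) (γ ρ)] at hvρ
    -- `γ'` is still nearly on course towards `A (-(S₀ + τ))` at time `σ`
    have hup : dist (γ' σ) (A (-(S₀ + τ))) ≤
        dist x (A (-(S₀ + τ))) - ρ + δ + δ / 4 := by
      linarith [hbS S₀ le_rfl]
    have h7 := dist_triangle x (γ' σ) (A (-(S₀ + τ)))
    have h8 := hγ'.dist_left hσ
    have h9 := dist_triangle (γ' (ρ' - δ)) (γ' σ) (A (-(S₀ + τ)))
    rw [hγ'.2.2 _ hmem _ hσ] at h9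
    rcases abs_cases (ρ' - δ - σ) with ⟨h, _⟩ | ⟨h, _⟩ <;> rw [h] at h9 <;> linarith

/-- An isometry translating `A` by at least `2δ` moves a point at distance `D > 3δ` from `A` by at
least `2D - 6δ`. -/
lemma no_short_displacement {δ τ : ℝ} (hδ : 0 < δ) (hτ : 2 * δ ≤ τ)
    (hgeo : GeodesicSpace X) (hslim : SlimTriangles X δ) {g : X → X} (hg : Isometry g)
    {A : ℝ → X} (hA : Isometry A) (hgA : ∀ t, g (A t) = A (t + τ)) {x : X}
    (hD : 3 * δ < infDist x (Set.range A)) :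
    2 * infDist x (Set.range A) - 6 * δ ≤ dist x (g x) := by
  by_contra! hshort
  obtain ⟨T₀, hT₀, hbT⟩ := exists_almost_busemann hA x (show 0 ≤ τ by linarith)
    (show 0 < δ / 4 by linarith)
  obtain ⟨S₀, hS₀, hbS⟩ := exists_almost_busemann (A := fun t => A (-t))
    (hA.comp (IsometryEquiv.neg ℝ).isometry) x (show 0 ≤ τ by linarith)
    (show 0 < δ / 4 by linarith)
  have step := fun T (hT : T₀ ≤ T) γ' (hγ' : IsGeodesicSegment γ' x (A T)) =>
    descent_step hδ hτ hgeo hslim hg hA hgA hD hshort hT₀ hS₀ hbT hbS hT hγ'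
  obtain ⟨γ₀, hγ₀⟩ := hgeo.exists_segment x (A T₀)
  obtain ⟨γ₁, ρ₁, hγ₁, hdet₁, -⟩ := step T₀ le_rfl γ₀ hγ₀
  have iter : ∀ n : ℕ, ∃ T γ ρ, T₀ ≤ T ∧ IsGeodesicSegment γ x (A T) ∧
      LateDetour δ A x S₀ T γ ρ ∧ ρ ≤ ρ₁ - n * (δ / 2) := by
    intro n
    induction n with
    | zero => exact ⟨T₀ + τ, γ₁, ρ₁, by linarith, hγ₁, hdet₁, by simp⟩
    | succ n ih =>
      obtain ⟨T, γ', ρ', hT, hγ', hdet', hle⟩ := ih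
      obtain ⟨γ, ρ, hγ, hdet, hdesc⟩ := step T hT γ' hγ'
      refine ⟨T + τ, γ, ρ, by linarith, hγ, hdet, ?_⟩
      have := hdesc ρ' hdet'
      push_cast
      linarith
  obtain ⟨n, hn⟩ := exists_nat_gt (ρ₁ / (δ / 2))
  obtain ⟨T, γ, ρ, -, -, hdet, hle⟩ := iter n
  rw [div_lt_iff₀ (by linarith)] at hn
  linarith [hdet.1.1]

end Descent

theorem bounded_displacement_implies_close_to_axis
    (δ ε C : ℝ) (hδ : 0 < δ) (hε : 0 < ε) (hC : 0 ≤ C)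
    (X : Type*) [MetricSpace X]
    (hgeo : GeodesicSpace X) (hslim : SlimTriangles X δ)
    (h : X → X) (hiso : Isometry h)
    (A : ℝ → X) (hA : Isometry A)
    (ℓ : ℝ) (hℓ : ε ≤ ℓ) (htrans : ∀ t : ℝ, h (A t) = A (t + ℓ))
    (x : X) (hx : dist x (h x) ≤ C) :
    infDist x (Set.range A) ≤ max (3 * δ) ((C * (⌈2 * δ / ε⌉₊ : ℝ) + 6 * δ) / 2) := by
  set n := ⌈2 * δ / ε⌉₊
  have hn : 2 * δ ≤ n * ℓ := by
    have h1 : 2 * δ / ε ≤ n := Nat.le_ceil _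
    rw [div_le_iff₀ hε] at h1
    exact h1.trans (mul_le_mul_of_nonneg_left hℓ n.cast_nonneg)
  have hiter : ∀ k : ℕ, Isometry h^[k] ∧ (∀ t, h^[k] (A t) = A (t + k * ℓ)) ∧
      dist x (h^[k] x) ≤ C * k := by
    intro k
    induction k with
    | zero => exact ⟨isometry_id, by simp, by simp⟩
    | succ k ih =>
      obtain ⟨h1, h2, h3⟩ := ih
      rw [Function.iterate_succ]
      refine ⟨h1.comp hiso, fun t => ?_, ?_⟩
      · rw [Function.comp_apply, htrans, h2]
        congr 1
        push_cast
        ring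
      · have h4 := dist_triangle x (h^[k] x) (h^[k] (h x))
        rw [h1.dist_eq] at h4
        rw [Function.comp_apply]
        push_cast
        linarith
  obtain ⟨h1, h2, h3⟩ := hiter n
  by_contra! hlt
  obtain ⟨hD, hD'⟩ := max_lt_iff.1 hlt
  have := no_short_displacement hδ hn hgeo hslim h1 hA h2 hD
  linarith
end
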